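/- arXiv:1706.07645 — 2 statements merged into one kernel-verified Lean document; each statement's English description precedes it below -/
import Mathlib

section
/- Let ℘ ∈ 𝔽_q[t] be monic irreducible of degree d, n ≥ 1, and A_n = 𝔽_q[t]/(℘^n). Let B be a nonzero flat A_n-algebra such that the quotient B/℘B is an integral domain, and let φ : B → B be an A_n-algebra homomorphism satisfying φ(b) ≡ b^{q^d} (mod ℘B) for every b ∈ B. Then the structure map A_n → B is injective and the fixed subring {b ∈ B : φ(b) = b} is exactly the image of A_n in B; equivalently, the sequence 0 → A_n → B →^{φ−1} B is exact. -/
open Polynomial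

/-!
Every non-unit of `A_n` is a multiple of `℘`, so flatness forces any element of `B` killed by a
nonzero element of `A_n` into `℘B`; applied to `1` this gives injectivity. If `φ b = b` and
`b = a + ℘^k c` with `℘^k ≠ 0`, then `℘^k (φ c - c) = 0`, hence `c^(q^d) ≡ φ c ≡ c (mod ℘B)`. The
roots of `X^(q^d) - X` in the domain `B/℘B` all come from the residue field `A_1`, so
`c ≡ a' (mod ℘B)` and `b ∈ A_n + ℘^(k+1) B`. Iterating up to `℘^n = 0` gives `b ∈ A_n`.
-/

theorem mem_range_algebraMap_of_pow_natCard_eq_self {K C : Type*} [Field K] [Finite K]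
    [CommRing C] [IsDomain C] [Algebra K C] {c : C} (hc : c ^ Nat.card K = c) :
    c ∈ (algebraMap K C).range := by
  have := Fintype.ofFinite K
  have hne : (X ^ Fintype.card K - X : K[X]) ≠ 0 :=
    FiniteField.X_pow_card_sub_X_ne_zero K Fintype.one_lt_card
  have hsplits : (X ^ Fintype.card K - X : K[X]).Splits := by
    rw [splits_iff_card_roots, FiniteField.roots_X_pow_card_sub_X,
      FiniteField.X_pow_card_sub_X_natDegree_eq K Fintype.one_lt_card, Finset.card_val,
      Finset.card_univ]
  refine hsplits.mem_range_of_isRoot hne ?_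
  simp [← Nat.card_eq_fintype_card, hc]

theorem mem_torsionOf_smul_top_of_smul_eq_zero {R M : Type*} [CommRing R] [AddCommGroup M]
    [Module R M] [Module.Flat R M] {r : R} {x : M} (h : r • x = 0) :
    x ∈ Ideal.torsionOf R R r • (⊤ : Submodule R M) := by
  obtain ⟨_, s, y, hx, hs⟩ := Module.Flat.isTrivialRelation_of_sum_smul_eq_zero
    (f := fun _ : Unit ↦ r) (x := fun _ ↦ x) (by simpa using h)
  rw [show x = ∑ j, s () j • y j from hx ()]
  refine sum_mem fun j _ ↦ Submodule.smul_mem_smul ?_ Submodule.mem_top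
  simpa [Ideal.mem_torsionOf_iff, mul_comm] using hs j

theorem isLocalRing_of_isNilpotent {R : Type*} [CommRing R] {m : Ideal R} [hmax : m.IsMaximal]
    (hm : IsNilpotent m) : IsLocalRing R := by
  obtain ⟨n, hn⟩ := hm
  refine .of_unique_max_ideal ⟨m, hmax, fun M hM ↦ ?_⟩
  have hmM : m ≤ M := hM.isPrime.le_of_pow_le (hn.trans_le bot_le)
  exact (hmax.eq_of_le hM.ne_top hmM).symm

theorem isMaximal_span_quotientMk {R : Type*} [CommRing R] {I : Ideal R} {x : R}
    [(Ideal.span {x}).IsMaximal] (hI : I ≤ Ideal.span {x}) :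
    (Ideal.span {Ideal.Quotient.mk I x}).IsMaximal := by
  rw [← Set.image_singleton, ← Ideal.map_span]
  exact .map_of_surjective_of_ker_le Ideal.Quotient.mk_surjective (Ideal.mk_ker.trans_le hI)

theorem natCard_quotient_span_quotientMk {R : Type*} [CommRing R] {I : Ideal R} {x : R}
    (hI : I ≤ Ideal.span {x}) :
    Nat.card ((R ⧸ I) ⧸ Ideal.span {Ideal.Quotient.mk I x}) = Nat.card (R ⧸ Ideal.span {x}) := by
  rw [← Set.image_singleton, ← Ideal.map_span]
  exact Nat.card_congr (DoubleQuot.quotQuotEquivQuotOfLE hI).toEquiv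

theorem natCard_quotient_span_singleton {k : Type*} [Field k] {f : k[X]} (hf : f ≠ 0) :
    Nat.card (k[X] ⧸ Ideal.span {f}) = Nat.card k ^ f.natDegree := by
  have : Module.Finite k (k[X] ⧸ Ideal.span {f}) := (AdjoinRoot.powerBasis hf).finite
  rw [Module.natCard_eq_pow_finrank (K := k), finrank_quotient_span_eq_natDegree]

section FrobeniusLift

open IsLocalRing

variable {A B : Type*} [CommRing A] [CommRing B] [Algebra A B]

theorem exists_sub_algebraMap_mem_map {m : Ideal A} [m.IsMaximal] [Finite (A ⧸ m)]
    [IsDomain (B ⧸ m.map (algebraMap A B))] {c : B}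
    (hc : c ^ Nat.card (A ⧸ m) - c ∈ m.map (algebraMap A B)) :
    ∃ a : A, c - algebraMap A B a ∈ m.map (algebraMap A B) := by
  let := Ideal.Quotient.field m
  rw [← Ideal.Quotient.eq, map_pow] at hc
  obtain ⟨x, hx⟩ := mem_range_algebraMap_of_pow_natCard_eq_self hc
  obtain ⟨a, rfl⟩ := Ideal.Quotient.mk_surjective x
  exact ⟨a, Ideal.Quotient.eq.1 hx.symm⟩

variable [Module.Flat A B]

theorem mem_map_maximalIdeal_of_smul_eq_zero [IsLocalRing A] {a : A} (ha : a ≠ 0) {b : B}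
    (hab : a • b = 0) : b ∈ (maximalIdeal A).map (algebraMap A B) := by
  have hle : Ideal.torsionOf A A a ≤ maximalIdeal A :=
    le_maximalIdeal (mt (Ideal.torsionOf_eq_top_iff A a).1 ha)
  have hb := Submodule.smul_mono_left hle (mem_torsionOf_smul_top_of_smul_eq_zero hab)
  rwa [Ideal.smul_top_eq_map] at hb

theorem algebraMap_injective_of_map_maximalIdeal_ne_top [IsLocalRing A]
    (hB : (maximalIdeal A).map (algebraMap A B) ≠ ⊤) : Function.Injective (algebraMap A B) := by
  refine (injective_iff_map_eq_zero _).2 fun a ha ↦ by_contra fun hne ↦ hB ?_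
  rw [Ideal.eq_top_iff_one]
  exact mem_map_maximalIdeal_of_smul_eq_zero hne (by rwa [← Algebra.algebraMap_eq_smul_one])

theorem exists_eq_algebraMap_add_pow_smul [IsLocalRing A] [Finite (A ⧸ maximalIdeal A)]
    [IsDomain (B ⧸ (maximalIdeal A).map (algebraMap A B))] {π : A}
    (hπ : maximalIdeal A = Ideal.span {π}) {φ : B →ₐ[A] B}
    (hφ : ∀ b, φ b - b ^ Nat.card (A ⧸ maximalIdeal A) ∈ (maximalIdeal A).map (algebraMap A B))
    {b : B} (hb : φ b = b) (k : ℕ) : ∃ (a : A) (c : B), b = algebraMap A B a + π ^ k • c := by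
  induction k with
  | zero => exact ⟨0, b, by simp⟩
  | succ k ih =>
    obtain ⟨a, c, hbc⟩ := ih
    by_cases hk : π ^ k = 0
    · exact ⟨a, 0, by simp [hbc, hk]⟩
    have hkill : π ^ k • (φ c - c) = 0 := by
      rw [hbc, map_add, map_smul, φ.commutes] at hb
      rw [smul_sub, add_left_cancel hb, sub_self]
    have hroot : c ^ Nat.card (A ⧸ maximalIdeal A) - c ∈ (maximalIdeal A).map (algebraMap A B) := by
      simpa using sub_mem (mem_map_maximalIdeal_of_smul_eq_zero hk hkill) (hφ c)
    obtain ⟨a', ha'⟩ := exists_sub_algebraMap_mem_map hroot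
    rw [hπ, Ideal.map_span, Set.image_singleton, Ideal.mem_span_singleton'] at ha'
    obtain ⟨e, he⟩ := ha'
    refine ⟨a + π ^ k * a', e, ?_⟩
    rw [hbc, ← sub_add_cancel c (algebraMap A B a'), ← he]
    simp only [Algebra.smul_def, map_add, map_mul, map_pow]
    ring

theorem fixed_points_of_frobenius_lift_general {π : A} [hmax : (Ideal.span {π}).IsMaximal]
    [hfin : Finite (A ⧸ Ideal.span {π})] [hdom : IsDomain (B ⧸ Ideal.span {algebraMap A B π})]
    (hπ : IsNilpotent π) (φ : B →ₐ[A] B)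
    (hφ : ∀ b, φ b - b ^ Nat.card (A ⧸ Ideal.span {π}) ∈ Ideal.span {algebraMap A B π}) :
    Function.Injective (algebraMap A B) ∧
      ∀ b : B, φ b = b ↔ b ∈ Set.range (algebraMap A B) := by
  obtain ⟨n, hn⟩ := hπ
  have : IsLocalRing A :=
    isLocalRing_of_isNilpotent (m := Ideal.span {π}) ⟨n, by simp [Ideal.span_singleton_pow, hn]⟩
  have hspan : Ideal.span {π} = maximalIdeal A := eq_maximalIdeal hmax
  rw [← Set.image_singleton, ← Ideal.map_span, hspan] at hdom hφ
  rw [hspan] at hfin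
  have hne : (maximalIdeal A).map (algebraMap A B) ≠ ⊤ :=
    Ideal.Quotient.nontrivial_iff.1 hdom.toNontrivial
  refine ⟨algebraMap_injective_of_map_maximalIdeal_ne_top hne, fun b ↦ ⟨fun hb ↦ ?_, ?_⟩⟩
  · obtain ⟨a, c, hbc⟩ := exists_eq_algebraMap_add_pow_smul hspan.symm hφ hb n
    exact ⟨a, by simp [hbc, hn]⟩
  · rintro ⟨a, rfl⟩
    exact φ.commutes a

end FrobeniusLift

/-- let `A_n = 𝔽_q[t]/(℘^n)` with `℘` monic irreducible of degree `d`, let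
`B` be a nonzero flat `A_n`-algebra with `B/℘B` a domain, and let `φ : B → B` be an
`A_n`-algebra endomorphism lifting the `q^d`-power Frobenius modulo `℘`. Then
`A_n → B` is injective and the `φ`-fixed subring of `B` is exactly the image of `A_n`;
i.e. the sequence `0 → A_n → B → B` (last map `φ − id`) is exact. -/
theorem fixed_points_of_frobenius_lift {Fq : Type*} [Field Fq] [Fintype Fq]
    (q : ℕ) (hq : q = Fintype.card Fq)
    (℘ : Fq[X]) (hmon : ℘.Monic) (hirr : Irreducible ℘)
    (d n : ℕ) (hdeg : ℘.natDegree = d) (hn : 1 ≤ n)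
    {B : Type*} [CommRing B] [Nontrivial B]
    [Algebra (Fq[X] ⧸ Ideal.span {℘ ^ n}) B]
    [Module.Flat (Fq[X] ⧸ Ideal.span {℘ ^ n}) B]
    (hdom : IsDomain (B ⧸ Ideal.span {algebraMap (Fq[X] ⧸ Ideal.span {℘ ^ n}) B
        (Ideal.Quotient.mk (Ideal.span {℘ ^ n}) ℘)}))
    (φ : B →ₐ[Fq[X] ⧸ Ideal.span {℘ ^ n}] B)
    (hφ : ∀ b : B, φ b - b ^ q ^ d ∈ Ideal.span {algebraMap (Fq[X] ⧸ Ideal.span {℘ ^ n}) B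
        (Ideal.Quotient.mk (Ideal.span {℘ ^ n}) ℘)}) :
    Function.Injective (algebraMap (Fq[X] ⧸ Ideal.span {℘ ^ n}) B) ∧
    ∀ b : B, φ b = b ↔ b ∈ Set.range (algebraMap (Fq[X] ⧸ Ideal.span {℘ ^ n}) B) := by
  have hle : Ideal.span {℘ ^ n} ≤ Ideal.span {℘} :=
    Ideal.span_singleton_le_span_singleton.2 (dvd_pow_self ℘ (by omega))
  have : (Ideal.span {℘}).IsMaximal := PrincipalIdealRing.isMaximal_of_irreducible hirr
  have := isMaximal_span_quotientMk hle
  have hcard : Nat.card (_ ⧸ Ideal.span {Ideal.Quotient.mk (Ideal.span {℘ ^ n}) ℘}) = q ^ d := by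
    rw [natCard_quotient_span_quotientMk hle, natCard_quotient_span_singleton hmon.ne_zero, hdeg,
      Nat.card_eq_fintype_card, hq]
  have := Nat.finite_of_card_ne_zero
    (hcard.trans_ne (pow_ne_zero d (hq.trans_ne Fintype.card_ne_zero)))
  have hnil : IsNilpotent (Ideal.Quotient.mk (Ideal.span {℘ ^ n}) ℘) :=
    ⟨n, by rw [← map_pow, Ideal.Quotient.mk_singleton_self]⟩
  exact fixed_points_of_frobenius_lift_general hnil φ (by rwa [hcard])
end

section
/- Let K₀ be a field equipped with an 𝔽_q[t]-algebra structure, and let 𝔪 ∈ 𝔽_q[t] be monic of degree m ≥ 1. Then the polynomial Φ^C_𝔪(X) − x^{−1} is irreducible in K₀((x))[X], where K₀((x)) is the field of formal Laurent series over K₀ in the variable x. (Equivalently, the monic polynomial X^{q^m} − x·Σ_{i=0}^{m} c_i X^{q^m − q^i}, obtained from Φ^C_𝔪(1/X) − 1/x by substituting X ↦ 1/X and clearing denominators, is Eisenstein at (x) in K₀[[x]][X], hence irreducible over K₀((x)).) -/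
open Polynomial

/-- `Φ` is the Carlitz module map `a ↦ Φ^C_a` over `𝔽_q[t]`: it is `𝔽_q`-linear,
turns multiplication into composition, sends `1` to `Z` and `t` to `t·Z + Z^q`. -/
def IsCarlitzHom {Fq : Type*} [Field Fq] (q : ℕ)
    (Φ : Fq[X] → Polynomial (Fq[X])) : Prop :=
  (∀ a b : Fq[X], Φ (a + b) = Φ a + Φ b) ∧
  (∀ (c : Fq) (a : Fq[X]), Φ (Polynomial.C c * a) = Polynomial.C (Polynomial.C c) * Φ a) ∧
  (∀ a b : Fq[X], Φ (a * b) = (Φ a).comp (Φ b)) ∧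
  Φ 1 = Polynomial.X ∧
  Φ Polynomial.X = Polynomial.C Polynomial.X * Polynomial.X + Polynomial.X ^ q

/-!
Multiplying `A - x⁻¹` by `x` gives `x A - 1`, a polynomial over `K₀⟦x⟧` whose constant coefficient
is a unit, whose other coefficients are divisible by `x`, and whose leading coefficient is not
divisible by `x ^ 2`: its reverse is Eisenstein at `(x)`, and Gauss's lemma transfers irreducibility
to `K₀⸨X⸩`. This works for every nonconstant `A` over `K₀`; the image of `Φ a` is nonconstant
because `Φ a` has degree `q ^ deg a` and leading coefficient in `𝔽_q`.
-/

section Reverse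

variable {R : Type*} [Semiring R] {f : R[X]}

theorem natDegree_reverse_of_coeff_zero_ne_zero (h0 : f.coeff 0 ≠ 0) :
    f.reverse.natDegree = f.natDegree := by
  rw [reverse_natDegree, natTrailingDegree_eq_zero.2 (Or.inr h0), Nat.sub_zero]

theorem leadingCoeff_reverse_of_coeff_zero_ne_zero (h0 : f.coeff 0 ≠ 0) :
    f.reverse.leadingCoeff = f.coeff 0 := by
  rw [reverse_leadingCoeff, trailingCoeff, natTrailingDegree_eq_zero.2 (Or.inr h0)]

variable [NoZeroDivisors R]

theorem isUnit_reverse_iff_of_coeff_zero_ne_zero (h0 : f.coeff 0 ≠ 0) :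
    IsUnit f.reverse ↔ IsUnit f := by
  suffices h : f.natDegree = 0 → f.reverse = f by
    constructor <;> intro hu
    · rwa [← h (natDegree_reverse_of_coeff_zero_ne_zero h0 ▸ natDegree_eq_zero_of_isUnit hu)]
    · rwa [h (natDegree_eq_zero_of_isUnit hu)]
  intro hdeg
  rw [eq_C_of_natDegree_eq_zero hdeg, reverse_C]

theorem irreducible_of_irreducible_reverse (h0 : f.coeff 0 ≠ 0) (h : Irreducible f.reverse) :
    Irreducible f := by
  refine ⟨mt (isUnit_reverse_iff_of_coeff_zero_ne_zero h0).2 h.not_isUnit, ?_⟩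
  rintro a b rfl
  rw [mul_coeff_zero] at h0
  exact (h.isUnit_or_isUnit (reverse_mul_of_domain a b)).imp
    (isUnit_reverse_iff_of_coeff_zero_ne_zero (left_ne_zero_of_mul h0)).1
    (isUnit_reverse_iff_of_coeff_zero_ne_zero (right_ne_zero_of_mul h0)).1

end Reverse

theorem isPrimitive_of_isUnit_coeff {R : Type*} [CommSemiring R] {f : R[X]} {n : ℕ}
    (h : IsUnit (f.coeff n)) : f.IsPrimitive := fun r hr =>
  isUnit_of_dvd_unit ((C_dvd_iff_dvd_coeff r f).1 hr n) h

theorem irreducible_of_reversed_eisenstein_criterion {R : Type*} [CommRing R] [IsDomain R]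
    {f : R[X]} {P : Ideal R} (hP : P.IsPrime) (h0 : IsUnit (f.coeff 0))
    (hfP : ∀ n ≠ 0, f.coeff n ∈ P) (hdeg : 0 < f.natDegree)
    (hlead : f.leadingCoeff ∉ P ^ 2) : Irreducible f := by
  have hrdeg := natDegree_reverse_of_coeff_zero_ne_zero h0.ne_zero
  have hrlead := leadingCoeff_reverse_of_coeff_zero_ne_zero h0.ne_zero
  have hprim : f.reverse.IsPrimitive :=
    isPrimitive_of_isUnit_coeff (n := f.reverse.natDegree) (by rwa [coeff_natDegree, hrlead])
  have heis : f.reverse.IsEisensteinAt P :=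
    { leading := fun h => hP.ne_top (P.eq_top_of_isUnit_mem (hrlead ▸ h) h0)
      mem := fun {n} hn => by
        rw [hrdeg] at hn
        rw [coeff_reverse, revAt_le hn.le]
        exact hfP _ (Nat.sub_ne_zero_of_lt hn)
      notMem := by rwa [coeff_zero_reverse] }
  exact irreducible_of_irreducible_reverse h0.ne_zero
    (heis.irreducible hP hprim (hrdeg ▸ hdeg))

section SubInvPrime

variable {R : Type*} [CommRing R] [IsDomain R] {π : R} {f : R[X]}

theorem natDegree_C_mul_sub_one (hπ : π ≠ 0) : (C π * f - 1).natDegree = f.natDegree := by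
  rw [← C_1, natDegree_sub_C, natDegree_C_mul hπ]

variable [IsLocalRing R]

theorem irreducible_C_mul_sub_one_of_prime (hπ : Prime π) (hdeg : 0 < f.natDegree)
    (hlead : ¬π ∣ f.leadingCoeff) : Irreducible (C π * f - 1) := by
  have hcoeff : ∀ n ≠ 0, (C π * f - 1).coeff n = π * f.coeff n := fun n hn => by
    rw [coeff_sub, coeff_C_mul, coeff_one, if_neg hn, sub_zero]
  have hndeg : (C π * f - 1).natDegree = f.natDegree := natDegree_C_mul_sub_one hπ.ne_zero
  refine irreducible_of_reversed_eisenstein_criterion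
    ((Ideal.span_singleton_prime hπ.ne_zero).2 hπ) ?_ (fun n hn => ?_) (hndeg ▸ hdeg) ?_
  · have hmem : π * f.coeff 0 ∈ nonunits R := mul_mem_nonunits_left hπ.not_isUnit
    simpa using (IsLocalRing.isUnit_one_sub_self_of_mem_nonunits _ hmem).neg
  · rw [hcoeff n hn]
    exact Ideal.mul_mem_right _ _ (Ideal.mem_span_singleton_self π)
  · rwa [leadingCoeff, hndeg, hcoeff _ hdeg.ne', Ideal.span_singleton_pow,
      Ideal.mem_span_singleton, sq, mul_dvd_mul_iff_left hπ.ne_zero]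

theorem irreducible_map_sub_C_inv_of_prime [IsGCDMonoid R] (K : Type*) [Field K] [Algebra R K]
    [IsFractionRing R K] (hπ : Prime π) (hdeg : 0 < f.natDegree) (hlead : ¬π ∣ f.leadingCoeff) :
    Irreducible (f.map (algebraMap R K) - C (algebraMap R K π)⁻¹) := by
  have hπK : algebraMap R K π ≠ 0 :=
    (map_ne_zero_iff _ (IsFractionRing.injective R K)).2 hπ.ne_zero
  have hirr := irreducible_C_mul_sub_one_of_prime hπ hdeg hlead
  have hprim : (C π * f - 1).IsPrimitive :=
    hirr.isPrimitive (natDegree_C_mul_sub_one (f := f) hπ.ne_zero ▸ hdeg.ne')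
  have hmap : (C π * f - 1).map (algebraMap R K) =
      C (algebraMap R K π) * (f.map (algebraMap R K) - C (algebraMap R K π)⁻¹) := by
    rw [mul_sub, ← C_mul, mul_inv_cancel₀ hπK, C_1, Polynomial.map_sub, Polynomial.map_mul,
      map_C, Polynomial.map_one]
  rw [hprim.irreducible_iff_irreducible_map_fraction_map (K := K), hmap] at hirr
  exact (irreducible_isUnit_mul (isUnit_C.2 hπK.isUnit)).1 hirr

end SubInvPrime

theorem irreducible_map_hahnSeriesC_sub_C_single_neg_one {K : Type*} [Field K] {f : K[X]}
    (hdeg : 0 < f.natDegree) :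
    Irreducible (f.map (HahnSeries.C : K →+* LaurentSeries K) -
      C (HahnSeries.single (-1 : ℤ) (1 : K))) := by
  have hinv : (algebraMap (PowerSeries K) (LaurentSeries K) PowerSeries.X)⁻¹ =
      HahnSeries.single (-1 : ℤ) (1 : K) := by
    simp
  have hC : (algebraMap (PowerSeries K) (LaurentSeries K)).comp PowerSeries.C =
      HahnSeries.C := by
    ext1 c
    exact HahnSeries.ofPowerSeries_C c
  have hlead : ¬PowerSeries.X ∣ (f.map (PowerSeries.C (R := K))).leadingCoeff := by
    rw [leadingCoeff_map, PowerSeries.X_dvd_iff, PowerSeries.constantCoeff_C]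
    exact leadingCoeff_ne_zero.2 (ne_zero_of_natDegree_gt hdeg)
  rw [← hinv, ← hC, ← Polynomial.map_map]
  exact irreducible_map_sub_C_inv_of_prime _ PowerSeries.X_prime
    (by rwa [natDegree_map]) hlead

theorem natDegree_C_mul_X_lt {R : Type*} [Semiring R] (r : R) {n : ℕ} (hn : 1 < n) :
    (C r * X : R[X]).natDegree < n :=
  ((natDegree_C_mul_le r X).trans natDegree_X_le).trans_lt hn

namespace IsCarlitzHom

variable {Fq : Type*} [Field Fq] {q : ℕ} {Φ : Fq[X] → Polynomial (Fq[X])}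

theorem apply_C (hΦ : IsCarlitzHom q Φ) (c : Fq) : Φ (C c) = C (C c) * X := by
  obtain ⟨-, hsmul, -, hone, -⟩ := hΦ
  simpa only [mul_one, hone] using hsmul c 1

theorem apply_eq_apply_divX_comp_add (hΦ : IsCarlitzHom q Φ) (a : Fq[X]) :
    Φ a = (Φ a.divX).comp (Φ X) + C (C (a.coeff 0)) * X := by
  have ⟨hadd, _, hmul, _, _⟩ := hΦ
  rw [← hΦ.apply_C, ← hmul, ← hadd, divX_mul_X_add]

theorem natDegree_apply_X (hΦ : IsCarlitzHom q Φ) (hq : 1 < q) : (Φ X).natDegree = q := by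
  obtain ⟨-, -, -, -, hX⟩ := hΦ
  rw [hX, natDegree_add_eq_right_of_natDegree_lt, natDegree_X_pow]
  exact (natDegree_C_mul_X_lt X hq).trans_eq (natDegree_X_pow q).symm

theorem monic_apply_X (hΦ : IsCarlitzHom q Φ) (hq : 1 < q) : (Φ X).Monic := by
  obtain ⟨-, -, -, -, hX⟩ := hΦ
  rw [hX]
  refine (monic_X_pow q).add_of_right (degree_lt_degree ?_)
  exact (natDegree_C_mul_X_lt X hq).trans_eq (natDegree_X_pow q).symm

theorem natDegree_apply (hΦ : IsCarlitzHom q Φ) (hq : 1 < q) {a : Fq[X]} (ha : a ≠ 0) :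
    (Φ a).natDegree = q ^ a.natDegree := by
  induction hn : a.natDegree generalizing a with
  | zero =>
    obtain ⟨c, rfl⟩ := natDegree_eq_zero.1 hn
    rw [hΦ.apply_C, natDegree_C_mul_X _ ha, pow_zero]
  | succ n ih =>
    have hn' : a.divX.natDegree = n := by
      rw [natDegree_divX_eq_natDegree_tsub_one, hn, Nat.add_sub_cancel]
    have hdivX : a.divX ≠ 0 := fun h => by
      rw [divX_eq_zero_iff.1 h, natDegree_C] at hn
      exact n.succ_ne_zero hn.symm
    have hcomp : ((Φ a.divX).comp (Φ X)).natDegree = q ^ (n + 1) := by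
      rw [natDegree_comp, ih hdivX hn', hΦ.natDegree_apply_X hq, pow_succ]
    have hlt : (C (C (a.coeff 0)) * X : Fq[X][X]).natDegree <
        ((Φ a.divX).comp (Φ X)).natDegree :=
      natDegree_C_mul_X_lt _ (hcomp ▸ Nat.one_lt_pow n.succ_ne_zero hq)
    rw [hΦ.apply_eq_apply_divX_comp_add, natDegree_add_eq_left_of_natDegree_lt hlt, hcomp]

theorem leadingCoeff_apply (hΦ : IsCarlitzHom q Φ) (hq : 1 < q) (a : Fq[X]) :
    (Φ a).leadingCoeff = C a.leadingCoeff := by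
  induction hn : a.natDegree generalizing a with
  | zero =>
    obtain ⟨c, rfl⟩ := natDegree_eq_zero.1 hn
    rw [hΦ.apply_C, leadingCoeff_C_mul_X, leadingCoeff_C]
  | succ n ih =>
    have ha : a ≠ 0 := ne_zero_of_natDegree_gt (n := n) (hn ▸ n.lt_succ_self)
    have hn' : a.divX.natDegree = n := by
      rw [natDegree_divX_eq_natDegree_tsub_one, hn, Nat.add_sub_cancel]
    have hlc : a.divX.leadingCoeff = a.leadingCoeff := by
      rw [leadingCoeff, leadingCoeff, hn', hn, coeff_divX]
    have hlt : (C (C (a.coeff 0)) * X : Fq[X][X]).natDegree < (Φ a).natDegree := by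
      rw [hΦ.natDegree_apply hq ha, hn]
      exact natDegree_C_mul_X_lt _ (Nat.one_lt_pow n.succ_ne_zero hq)
    have hcomp : (Φ a.divX).comp (Φ X) = Φ a - C (C (a.coeff 0)) * X :=
      eq_sub_of_add_eq (hΦ.apply_eq_apply_divX_comp_add a).symm
    have hX : (Φ X).natDegree ≠ 0 := by
      rw [hΦ.natDegree_apply_X hq]
      exact Nat.ne_zero_of_lt hq
    rw [← leadingCoeff_sub_of_degree_lt (degree_lt_degree hlt), ← hcomp, leadingCoeff_comp hX,
      ih _ hn', hΦ.monic_apply_X hq, one_pow, mul_one, hlc]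

end IsCarlitzHom

theorem carlitz_sub_inv_x_irreducible_general {Fq : Type*} [Field Fq] {q : ℕ} (hq : 1 < q)
    {Φ : Fq[X] → Polynomial (Fq[X])} (hΦ : IsCarlitzHom q Φ) {K₀ : Type*} [Field K₀]
    [Algebra Fq[X] K₀] {a : Fq[X]} (ha : 0 < a.natDegree) :
    Irreducible
      ((Φ a).map ((HahnSeries.C : K₀ →+* LaurentSeries K₀).comp (algebraMap Fq[X] K₀))
        - C (HahnSeries.single (-1 : ℤ) (1 : K₀))) := by
  have ha0 : a ≠ 0 := ne_zero_of_natDegree_gt ha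
  have hlead : IsUnit (Φ a).leadingCoeff := by
    rw [hΦ.leadingCoeff_apply hq]
    exact isUnit_C.2 (leadingCoeff_ne_zero.2 ha0).isUnit
  have hdeg : ((Φ a).map (algebraMap Fq[X] K₀)).natDegree = q ^ a.natDegree := by
    rw [natDegree_map_eq_of_isUnit_leadingCoeff _ hlead, hΦ.natDegree_apply hq ha0]
  rw [← Polynomial.map_map]
  exact irreducible_map_hahnSeriesC_sub_C_single_neg_one
    (hdeg ▸ pow_pos (zero_lt_one.trans hq) _)

/-- for a field `K₀` which is an `𝔽_q[t]`-algebra and `𝔪` monic of degree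
`m ≥ 1`, the polynomial `Φ^C_𝔪(X) − x^{−1}` is irreducible over the Laurent series
field `K₀((x))` (here `x^{-1}` is the Laurent series `single (−1) 1`). -/
theorem carlitz_sub_inv_x_irreducible {Fq : Type*} [Field Fq] [Fintype Fq]
    (q : ℕ) (hq : q = Fintype.card Fq)
    (Φ : Fq[X] → Polynomial (Fq[X])) (hΦ : IsCarlitzHom q Φ)
    {K₀ : Type*} [Field K₀] [Algebra Fq[X] K₀]
    (𝔪 : Fq[X]) (hmon : 𝔪.Monic) (m : ℕ) (hm : 1 ≤ m) (hdeg : 𝔪.natDegree = m) :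
    Irreducible
      ((Φ 𝔪).map ((HahnSeries.C : K₀ →+* LaurentSeries K₀).comp (algebraMap Fq[X] K₀))
        - Polynomial.C (HahnSeries.single (-1 : ℤ) (1 : K₀))) :=
  carlitz_sub_inv_x_irreducible_general (hq ▸ Fintype.one_lt_card) hΦ (hdeg ▸ hm)
end
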